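/- Let u ∈ BV(ℝⁿ, γ) be bounded, γ standard Gaussian, T_t the Ornstein–Uhlenbeck semigroup. Then ∫ |T_t u − u| dγ ≤ c_t |D_γ u|(ℝⁿ) with c_t = √(2/π)∫₀ᵗ e^{-s}/√(1−e^{-2s}) ds. -/

import Mathlib

open MeasureTheory Real
open scoped RealInnerProductSpace

noncomputable def stdGaussian (n : ℕ) : Measure (EuclideanSpace ℝ (Fin n)) :=
  volume.withDensity fun x => ENNReal.ofReal ((2 * π) ^ (-(n : ℝ) / 2) * Real.exp (-‖x‖ ^ 2 / 2))

def IsC1b {E : Type*} [NormedAddCommGroup E] [NormedSpace ℝ E] (φ : E → ℝ) : Prop :=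
  ContDiff ℝ 1 φ ∧ ∃ C, ∀ x, |φ x| ≤ C ∧ ‖fderiv ℝ φ x‖ ≤ C

def IsGaussDeriv (n : ℕ) (u : EuclideanSpace ℝ (Fin n) → ℝ)
    (σ : Measure (EuclideanSpace ℝ (Fin n)))
    (ν : EuclideanSpace ℝ (Fin n) → EuclideanSpace ℝ (Fin n)) : Prop :=
  IsFiniteMeasure σ ∧ (∀ᵐ x ∂σ, ‖ν x‖ = 1) ∧
  ∀ φ : EuclideanSpace ℝ (Fin n) → ℝ, IsC1b φ → ∀ h,
    ∫ x, u x * fderiv ℝ φ x h ∂(stdGaussian n) =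
      -∫ x, φ x * ⟪ν x, h⟫ ∂σ + ∫ x, u x * φ x * ⟪h, x⟫ ∂(stdGaussian n)

lemma gd_integrable (n : ℕ) : Integrable (fun x : EuclideanSpace ℝ (Fin n) =>
    (2 * π) ^ (-(n : ℝ) / 2) * Real.exp (-‖x‖ ^ 2 / 2)) := by
  have h := (GaussianFourier.integrable_cexp_neg_mul_sq_norm_add (b := (1/2 : ℂ)) (by norm_num) 0
    (0 : EuclideanSpace ℝ (Fin n))).norm
  refine Integrable.const_mul (h.congr (ae_of_all _ fun x => ?_)) _
  simp only [Complex.norm_exp]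
  congr 1
  simp [← Complex.ofReal_pow]
  ring

instance gd_finite (n : ℕ) : IsFiniteMeasure (stdGaussian n) := by
  unfold stdGaussian
  exact isFiniteMeasure_withDensity_ofReal (gd_integrable n).2

lemma gd_integral {F : Type*} [NormedAddCommGroup F] [NormedSpace ℝ F] (n : ℕ)
    (f : EuclideanSpace ℝ (Fin n) → F) :
    ∫ x, f x ∂(stdGaussian n) =
      ∫ x, ((2 * π) ^ (-(n : ℝ) / 2) * Real.exp (-‖x‖ ^ 2 / 2)) • f x := by
  unfold stdGaussian
  rw [integral_withDensity_eq_integral_toReal_smul (by fun_prop) (by simp)]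
  congr 1 with x
  rw [ENNReal.toReal_ofReal (by positivity)]

lemma gd_eq (n : ℕ) : stdGaussian n = ProbabilityTheory.stdGaussian (EuclideanSpace ℝ (Fin n)) := by
  apply Measure.ext_of_charFun
  ext w
  rw [ProbabilityTheory.charFun_stdGaussian, charFun_apply, gd_integral]
  have h := GaussianFourier.integral_cexp_neg_mul_sq_norm_add (b := (1/2 : ℂ)) (by norm_num)
    Complex.I w
  have h2 : ∀ x : EuclideanSpace ℝ (Fin n),
      ((2 * π) ^ (-(n : ℝ) / 2) * Real.exp (-‖x‖ ^ 2 / 2)) • Complex.exp (⟪x, w⟫ * Complex.I)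
      = (((2 * π) ^ (-(n : ℝ) / 2) : ℝ) : ℂ) *
        Complex.exp (-(1/2 : ℂ) * ‖x‖ ^ 2 + Complex.I * ⟪w, x⟫) := by
    intro x
    rw [Complex.real_smul, Complex.ofReal_mul, mul_assoc, Complex.ofReal_exp, ← Complex.exp_add,
      real_inner_comm]
    congr 2
    push_cast
    ring
  simp_rw [h2]
  rw [integral_const_mul, h, ← mul_assoc]
  have : (((2 * π) ^ (-(n : ℝ) / 2) : ℝ) : ℂ) *
     (π / (1/2 : ℂ)) ^ (Module.finrank ℝ (EuclideanSpace ℝ (Fin n)) / 2 : ℂ) = 1 := by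
    have e : (π / (1/2 : ℂ)) ^ (Module.finrank ℝ (EuclideanSpace ℝ (Fin n)) / 2 : ℂ)
      = (((2 * π) ^ ((n : ℝ) / 2) : ℝ) : ℂ) := by
      rw [Complex.ofReal_cpow (by positivity)]
      simp
      ring_nf
    rw [e, ← Complex.ofReal_mul, ← Real.rpow_add (by positivity)]
    simp [neg_div]
  rw [this, one_mul]
  congr 1
  simp
  ring

instance gd_prob (n : ℕ) : IsProbabilityMeasure (stdGaussian n) := by
  rw [gd_eq]; infer_instance

instance gd_gauss (n : ℕ) : ProbabilityTheory.IsGaussian (stdGaussian n) := by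
  rw [gd_eq]; infer_instance

lemma gd_rot (n : ℕ) (θ : ℝ) : ((stdGaussian n).prod (stdGaussian n)).map
    (ContinuousLinearMap.rotation θ) = (stdGaussian n).prod (stdGaussian n) := by
  apply ProbabilityTheory.IsGaussian.map_rotation_eq_self
  rw [gd_eq]; simp

lemma gd_norm_integrable (n : ℕ) : Integrable (fun x => ‖x‖) (stdGaussian n) := by
  have := (ProbabilityTheory.IsGaussian.integrable_id (μ := stdGaussian n)).norm
  simpa using this

lemma gd_sq_integrable (n : ℕ) : Integrable (fun x => ‖x‖^2) (stdGaussian n) := by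
  have := (ProbabilityTheory.IsGaussian.memLp_two_id (μ := stdGaussian n)).integrable_norm_pow (by simp)
  simpa using this

lemma gd_ac (n : ℕ) : stdGaussian n ≪ volume := withDensity_absolutelyContinuous _ _

lemma abs_gaussianReal : ∫ x, |x| ∂(ProbabilityTheory.gaussianReal 0 1) = √(2 / π) := by
  rw [ProbabilityTheory.integral_gaussianReal_eq_integral_smul (by simp)]
  have h : ∀ x : ℝ, ProbabilityTheory.gaussianPDFReal 0 1 x • |x| =
      (√(2 * π))⁻¹ * (|x| * rexp (-(1/2) * |x| ^ 2)) := by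
    intro x
    simp [ProbabilityTheory.gaussianPDFReal]
    ring_nf
  simp_rw [h]
  rw [integral_const_mul, integral_comp_abs (f := fun x => x * rexp (-(1/2) * x^2))]
  have := integral_rpow_mul_exp_neg_mul_rpow (p := 2) (q := 1) (b := 1/2) (by norm_num) (by norm_num) (by norm_num)
  simp only [Real.rpow_one, Real.rpow_two] at this
  rw [this]
  norm_num
  have h2 := Real.sq_sqrt (show (0:ℝ) ≤ 2 by norm_num)
  field_simp
  simp [h2]

lemma gd_map_inner (n : ℕ) (e : EuclideanSpace ℝ (Fin n)) (he : ‖e‖ = 1) :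
    (stdGaussian n).map (fun y => ⟪e, y⟫) = ProbabilityTheory.gaussianReal 0 1 := by
  have := ProbabilityTheory.IsGaussian.map_eq_gaussianReal (μ := stdGaussian n) (innerSL ℝ e)
  have h2 : (fun y => ⟪e, y⟫) = innerSL ℝ e := by ext; simp
  rw [h2, this, gd_eq, ProbabilityTheory.integral_strongDual_stdGaussian,
    ProbabilityTheory.variance_dual_stdGaussian]
  simp [he]

lemma gd_abs_inner (n : ℕ) (e : EuclideanSpace ℝ (Fin n)) (he : ‖e‖ = 1) :
    ∫ y, |⟪e, y⟫| ∂(stdGaussian n) = √(2 / π) := by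
  rw [← abs_gaussianReal, ← gd_map_inner n e he, integral_map (by fun_prop) (by fun_prop)]

lemma C1b_comp {E : Type*} [NormedAddCommGroup E] [NormedSpace ℝ E] {φ : E → ℝ}
    (hφ : IsC1b φ) (a : ℝ) (c : E) : IsC1b (fun x => φ (a • x + c)) ∧
    ∀ x h, fderiv ℝ (fun x => φ (a • x + c)) x h = a * fderiv ℝ φ (a • x + c) h := by
  obtain ⟨h1, K, hK⟩ := hφ
  have hd : ∀ x, fderiv ℝ (fun x => φ (a • x + c)) x = a • fderiv ℝ φ (a • x + c) := by
    intro x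
    have hA : HasFDerivAt (fun x : E => a • x + c) (a • ContinuousLinearMap.id ℝ E) x :=
      ((hasFDerivAt_id x).const_smul a).add_const c
    have := ((h1.differentiable (by norm_num)) (a • x + c)).hasFDerivAt.comp x hA
    rw [show (fun x => φ (a • x + c)) = φ ∘ (fun x => a • x + c) from rfl, this.fderiv]
    ext; simp
  refine ⟨⟨h1.comp (by fun_prop), max K (|a| * K), fun x => ⟨(hK _).1.trans (le_max_left _ _), ?_⟩⟩, ?_⟩
  · rw [hd, norm_smul, Real.norm_eq_abs]
    exact (mul_le_mul_of_nonneg_left (hK _).2 (abs_nonneg a)).trans (le_max_right _ _)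
  · intro x h; rw [hd]; simp

lemma C1b_add {E : Type*} [NormedAddCommGroup E] [NormedSpace ℝ E] {φ ψ : E → ℝ}
    (hφ : IsC1b φ) (hψ : IsC1b ψ) : IsC1b (fun x => φ x + ψ x) ∧
    ∀ x, fderiv ℝ (fun x => φ x + ψ x) x = fderiv ℝ φ x + fderiv ℝ ψ x := by
  obtain ⟨h1, K, hK⟩ := hφ
  obtain ⟨h2, K', hK'⟩ := hψ
  have hd : ∀ x, fderiv ℝ (fun x => φ x + ψ x) x = fderiv ℝ φ x + fderiv ℝ ψ x := fun x =>
    fderiv_fun_add (h1.differentiable (by norm_num) x) (h2.differentiable (by norm_num) x)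
  refine ⟨⟨h1.add h2, K + K', fun x => ⟨?_, ?_⟩⟩, hd⟩
  · exact (abs_add_le _ _).trans (add_le_add (hK x).1 (hK' x).1)
  · rw [hd]; exact (norm_add_le _ _).trans (add_le_add (hK x).2 (hK' x).2)

lemma C1b_const {E : Type*} [NormedAddCommGroup E] [NormedSpace ℝ E] (c : ℝ) :
    IsC1b (fun _ : E => c) :=
  ⟨contDiff_const, |c|, fun x => by simp⟩

lemma C1b_fderiv_meas {n : ℕ} {φ : EuclideanSpace ℝ (Fin n) → ℝ} (hφ : IsC1b φ) :
    Continuous (fderiv ℝ φ) := hφ.1.continuous_fderiv (by norm_num)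

/-- integrability helper -/
lemma gd_int_of_bound {n : ℕ} {f : EuclideanSpace ℝ (Fin n) → ℝ} (hf : Measurable f) (K : ℝ)
    (h : ∀ x, |f x| ≤ K * (1 + ‖x‖)) : Integrable f (stdGaussian n) := by
  refine Integrable.mono' (((integrable_const (1:ℝ)).add (gd_norm_integrable n)).const_mul K)
    hf.aestronglyMeasurable (ae_of_all _ fun x => ?_)
  simpa using h x

lemma gd_int_smul {n : ℕ} {f : EuclideanSpace ℝ (Fin n) → ℝ} (h : Integrable f (stdGaussian n)) :
    Integrable (fun x => ((2 * π) ^ (-(n : ℝ) / 2) * Real.exp (-‖x‖ ^ 2 / 2)) * f x) := by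
  unfold stdGaussian at h
  rw [integrable_withDensity_iff_integrable_smul' (by fun_prop) (by simp)] at h
  refine h.congr (ae_of_all _ fun x => ?_)
  simp only [smul_eq_mul]
  rw [ENNReal.toReal_ofReal (by positivity)]

lemma gd_ibp {n : ℕ} {ψ : EuclideanSpace ℝ (Fin n) → ℝ} (hψ : IsC1b ψ)
    (h : EuclideanSpace ℝ (Fin n)) :
    ∫ x, fderiv ℝ ψ x h ∂(stdGaussian n) = ∫ x, ψ x * ⟪h, x⟫ ∂(stdGaussian n) := by
  have hc := C1b_fderiv_meas hψ
  obtain ⟨h1, K, hK⟩ := hψ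
  have hK0 : 0 ≤ K := (abs_nonneg _).trans (hK 0).1
  have hρ : ∀ x : EuclideanSpace ℝ (Fin n),
      HasFDerivAt (fun x : EuclideanSpace ℝ (Fin n) =>
        (2 * π) ^ (-(n : ℝ) / 2) * Real.exp (-‖x‖ ^ 2 / 2))
      (-((2 * π) ^ (-(n : ℝ) / 2) * Real.exp (-‖x‖ ^ 2 / 2)) • innerSL ℝ x) x := by
    intro x
    have h0 := ((hasStrictFDerivAt_norm_sq x).hasFDerivAt.neg.mul_const (1/2)).exp.const_mul
      ((2 * π) ^ (-(n : ℝ) / 2))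
    have e : (fun x : EuclideanSpace ℝ (Fin n) =>
        (2 * π) ^ (-(n : ℝ) / 2) * Real.exp (-‖x‖ ^ 2 / 2)) = fun y =>
        (2 * π) ^ (-(n : ℝ) / 2) * rexp ((-fun x => ‖x‖ ^ 2) y * (1 / 2)) := by
      ext y; simp [div_eq_mul_inv]
    rw [e]
    refine h0.congr_fderiv ?_
    ext y; simp [div_eq_mul_inv]; ring
  have key := integral_mul_fderiv_eq_neg_fderiv_mul_of_integrable (μ := volume)
    (f := fun x : EuclideanSpace ℝ (Fin n) =>
        (2 * π) ^ (-(n : ℝ) / 2) * Real.exp (-‖x‖ ^ 2 / 2)) (g := ψ) (v := h) ?_ ?_ ?_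
    (fun x _ => (hρ x).differentiableAt) (fun x _ => h1.differentiable (by norm_num) x)
  · rw [gd_integral, gd_integral]
    simp only [smul_eq_mul]
    rw [key, ← integral_neg]
    congr 1 with x
    rw [(hρ x).fderiv]
    simp [real_inner_comm]; ring
  · have := gd_int_smul (gd_int_of_bound (f := fun x => ψ x * ⟪x, h⟫) (n := n)
      (by have := h1.continuous; fun_prop) (K * ‖h‖) ?_)
    · refine this.neg.congr (ae_of_all _ fun x => ?_)
      simp only [(hρ x).fderiv]
      simp; ring
    · intro x
      rw [abs_mul]
      calc |ψ x| * |⟪x, h⟫| ≤ K * (‖x‖ * ‖h‖) := by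
            gcongr; exacts [(hK x).1, abs_real_inner_le_norm _ _]
        _ ≤ _ := by nlinarith [mul_nonneg hK0 (norm_nonneg h)]
  · apply gd_int_smul
    apply gd_int_of_bound (by fun_prop) (K * ‖h‖)
    intro x
    have : |fderiv ℝ ψ x h| ≤ K * ‖h‖ :=
      ((fderiv ℝ ψ x).le_opNorm h).trans (by gcongr; exact (hK x).2)
    nlinarith [mul_nonneg (mul_nonneg hK0 (norm_nonneg h)) (norm_nonneg x)]
  · apply gd_int_smul
    apply gd_int_of_bound (by have := h1.continuous; fun_prop) K
    intro x
    nlinarith [(hK x).1, norm_nonneg x]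

lemma junk {n : ℕ} {u : EuclideanSpace ℝ (Fin n) → ℝ}
    (hu : Measurable u) {C : ℝ} (hb : ∀ x, |u x| ≤ C)
    {σ : Measure (EuclideanSpace ℝ (Fin n))}
    {ν : EuclideanSpace ℝ (Fin n) → EuclideanSpace ℝ (Fin n)}
    (hBV : IsGaussDeriv n u σ ν) (hν : ¬ AEStronglyMeasurable ν σ)
    (φ : EuclideanSpace ℝ (Fin n) → ℝ) (hφ : IsC1b φ) (k : EuclideanSpace ℝ (Fin n)) :
    ∫ x, φ x * ⟪ν x, k⟫ ∂σ = 0 := by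
  obtain ⟨hfin, hone, hD⟩ := hBV
  have hC0 : 0 ≤ C := (abs_nonneg _).trans (hb 0)
  -- integrability
  have I1 : ∀ φ : EuclideanSpace ℝ (Fin n) → ℝ, IsC1b φ → ∀ h,
      Integrable (fun x => u x * fderiv ℝ φ x h) (stdGaussian n) := by
    intro φ hφ h
    have hc := C1b_fderiv_meas hφ
    obtain ⟨h1, K, hK⟩ := hφ
    have hK0 : 0 ≤ K := (abs_nonneg _).trans (hK 0).1
    apply gd_int_of_bound (by fun_prop) (C * (K * ‖h‖))
    intro x
    have : |fderiv ℝ φ x h| ≤ K * ‖h‖ :=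
      ((fderiv ℝ φ x).le_opNorm h).trans (by gcongr; exact (hK x).2)
    rw [abs_mul]
    have h2 : |u x| * |fderiv ℝ φ x h| ≤ C * (K * ‖h‖) := by gcongr; exact hb x
    have h3 : 0 ≤ C * (K * ‖h‖) := by positivity
    nlinarith [mul_nonneg h3 (norm_nonneg x)]
  have I2 : ∀ φ : EuclideanSpace ℝ (Fin n) → ℝ, IsC1b φ → ∀ h,
      Integrable (fun x => u x * φ x * ⟪h, x⟫) (stdGaussian n) := by
    intro φ hφ h
    obtain ⟨h1, K, hK⟩ := hφ
    have hK0 : 0 ≤ K := (abs_nonneg _).trans (hK 0).1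
    have := h1.continuous
    apply gd_int_of_bound (by fun_prop) (C * K * ‖h‖)
    intro x
    rw [abs_mul, abs_mul]
    have h2 : |u x| * |φ x| * |⟪h, x⟫| ≤ C * K * (‖h‖ * ‖x‖) := by
      gcongr; exacts [hb x, (hK x).1, abs_real_inner_le_norm _ _]
    have h3 : 0 ≤ C * K * ‖h‖ := by positivity
    nlinarith
  have Ladd1 : ∀ φ ψ : EuclideanSpace ℝ (Fin n) → ℝ, IsC1b φ → IsC1b ψ → ∀ h,
      ∫ x, (φ x + ψ x) * ⟪ν x, h⟫ ∂σ = ∫ x, φ x * ⟪ν x, h⟫ ∂σ + ∫ x, ψ x * ⟪ν x, h⟫ ∂σ := by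
    intro φ ψ hφ hψ h
    have e1 := hD φ hφ h
    have e2 := hD ψ hψ h
    have e3 := hD _ (C1b_add hφ hψ).1 h
    have a1 := integral_add (I1 φ hφ h) (I1 ψ hψ h)
    have a2 := integral_add (I2 φ hφ h) (I2 ψ hψ h)
    have b1 : ∫ x, u x * fderiv ℝ (fun x => φ x + ψ x) x h ∂(stdGaussian n) =
        ∫ x, (u x * fderiv ℝ φ x h + u x * fderiv ℝ ψ x h) ∂(stdGaussian n) := by
      congr 1 with x; rw [(C1b_add hφ hψ).2]; simp; ring
    have b2 : ∫ x, u x * (φ x + ψ x) * ⟪h, x⟫ ∂(stdGaussian n) =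
        ∫ x, (u x * φ x * ⟪h, x⟫ + u x * ψ x * ⟪h, x⟫) ∂(stdGaussian n) := by
      congr 1 with x; ring
    linarith
  have Ladd2 : ∀ φ : EuclideanSpace ℝ (Fin n) → ℝ, IsC1b φ → ∀ h k,
      ∫ x, φ x * ⟪ν x, h + k⟫ ∂σ = ∫ x, φ x * ⟪ν x, h⟫ ∂σ + ∫ x, φ x * ⟪ν x, k⟫ ∂σ := by
    intro φ hφ h k
    have e1 := hD φ hφ h
    have e2 := hD φ hφ k
    have e3 := hD φ hφ (h + k)
    have a1 := integral_add (I1 φ hφ h) (I1 φ hφ k)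
    have a2 := integral_add (I2 φ hφ h) (I2 φ hφ k)
    have b1 : ∫ x, u x * fderiv ℝ φ x (h + k) ∂(stdGaussian n) =
        ∫ x, (u x * fderiv ℝ φ x h + u x * fderiv ℝ φ x k) ∂(stdGaussian n) := by
      congr 1 with x; rw [map_add]; ring
    have b2 : ∫ x, u x * φ x * ⟪h + k, x⟫ ∂(stdGaussian n) =
        ∫ x, (u x * φ x * ⟪h, x⟫ + u x * φ x * ⟪k, x⟫) ∂(stdGaussian n) := by
      congr 1 with x; rw [inner_add_left]; ring
    linarith
  have bad : ∃ h, ¬ Integrable (fun x => ⟪ν x, h⟫) σ := by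
    by_contra! hcon
    apply hν
    let b := EuclideanSpace.basisFun (Fin n) ℝ
    have : ν = fun x => ∑ i, ⟪ν x, b i⟫ • b i := by
      ext1 x
      conv_lhs => rw [← b.sum_repr' (ν x)]
      simp_rw [real_inner_comm]
    rw [this]
    exact Finset.aestronglyMeasurable_fun_sum _ fun i _ => (hcon (b i)).1.smul_const _
  have allbad : ∀ h, ¬ Integrable (fun x => ⟪ν x, h⟫) σ → ∀ φ, IsC1b φ →
      ∫ x, φ x * ⟪ν x, h⟫ ∂σ = 0 := by
    intro h hh φ hφ
    by_cases hi : Integrable (fun x => φ x * ⟪ν x, h⟫) σ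
    · have h1 := Ladd1 (fun _ => 1) φ (C1b_const 1) hφ h
      rw [integral_undef, integral_undef (f := fun x => (1:ℝ) * ⟪ν x, h⟫)] at h1
      · linarith
      · simpa using hh
      · intro h3
        apply hh
        refine (h3.sub hi).congr (ae_of_all _ fun x => ?_)
        simp; ring
    · exact integral_undef hi
  obtain ⟨h, hh⟩ := bad
  by_cases hk : Integrable (fun x => ⟪ν x, k⟫) σ
  · have h1 := Ladd2 φ hφ h k
    rw [allbad h hh φ hφ, allbad (h + k) ?_ φ hφ] at h1
    · linarith
    · intro h3
      apply hh
      refine (h3.sub hk).congr (ae_of_all _ fun x => ?_)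
      simp [inner_add_right]
  · exact allbad k hk φ hφ

lemma sigma_bound {n : ℕ} {u : EuclideanSpace ℝ (Fin n) → ℝ}
    (hu : Measurable u) {C : ℝ} (hb : ∀ x, |u x| ≤ C)
    {σ : Measure (EuclideanSpace ℝ (Fin n))}
    {ν : EuclideanSpace ℝ (Fin n) → EuclideanSpace ℝ (Fin n)}
    (hBV : IsGaussDeriv n u σ ν)
    (φ : EuclideanSpace ℝ (Fin n) → ℝ) (hφ : IsC1b φ) (hφ1 : ∀ x, |φ x| ≤ 1) (a b : ℝ) :
    |∫ y, ∫ x, φ (a • x + b • y) * ⟪ν x, y⟫ ∂σ ∂(stdGaussian n)| ≤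
      √(2 / π) * (σ Set.univ).toReal := by
  by_cases hν : AEStronglyMeasurable ν σ
  · obtain ⟨hfin, hone, hD⟩ := hBV
    have m1 : AEStronglyMeasurable (fun p : EuclideanSpace ℝ (Fin n) × EuclideanSpace ℝ (Fin n) =>
        |⟪ν p.2, p.1⟫|) ((stdGaussian n).prod σ) := by
      have h1 : AEStronglyMeasurable (fun p : EuclideanSpace ℝ (Fin n) × EuclideanSpace ℝ (Fin n) =>
        ν p.2) ((stdGaussian n).prod σ) := hν.comp_snd
      have h2 : AEStronglyMeasurable (fun p : EuclideanSpace ℝ (Fin n) × EuclideanSpace ℝ (Fin n) =>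
        p.1) ((stdGaussian n).prod σ) := by fun_prop
      exact (AEStronglyMeasurable.inner (𝕜 := ℝ) h1 h2).norm
    have hone2 : ∀ᵐ p ∂((stdGaussian n).prod σ), ‖ν p.2‖ = 1 :=
      Measure.quasiMeasurePreserving_snd.ae hone
    have I : Integrable (fun p : EuclideanSpace ℝ (Fin n) × EuclideanSpace ℝ (Fin n) =>
        |⟪ν p.2, p.1⟫|) ((stdGaussian n).prod σ) := by
      refine ((gd_norm_integrable n).comp_fst σ).mono' m1 ?_
      filter_upwards [hone2] with p hp
      have := abs_real_inner_le_norm (ν p.2) p.1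
      rw [hp] at this
      simpa using this
    have I3 := I.integral_prod_left
    have step : ∀ y, |∫ x, φ (a • x + b • y) * ⟪ν x, y⟫ ∂σ| ≤ ∫ x, |⟪ν x, y⟫| ∂σ := by
      intro y
      rw [← Real.norm_eq_abs]
      have Iy : Integrable (fun x => |⟪ν x, y⟫|) σ := by
        refine (integrable_const ‖y‖).mono' (AEStronglyMeasurable.inner (𝕜 := ℝ) hν (aestronglyMeasurable_const (b := y))).norm ?_
        filter_upwards [hone] with p hp
        have := abs_real_inner_le_norm (ν p) y
        rw [hp] at this
        simpa using this
      refine norm_integral_le_of_norm_le Iy (ae_of_all _ fun x => ?_)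
      rw [Real.norm_eq_abs, abs_mul]
      exact mul_le_of_le_one_left (abs_nonneg _) (hφ1 _)
    rw [← Real.norm_eq_abs]
    refine (norm_integral_le_of_norm_le I3 (ae_of_all _ fun y => step y)).trans ?_
    rw [integral_integral_swap I, integral_congr_ae (g := fun _ => √(2 / π))]
    · simp [mul_comm, Measure.real]
    · filter_upwards [hone] with x hx
      exact gd_abs_inner n _ hx
  · have : ∀ y, ∫ x, φ (a • x + b • y) * ⟪ν x, y⟫ ∂σ = 0 := fun y =>
      junk hu hb hBV hν _ (C1b_comp hφ a (b • y)).1 y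
    simp only [this]
    simp only [integral_zero, abs_zero]
    positivity

lemma F_deriv {n : ℕ} {u : EuclideanSpace ℝ (Fin n) → ℝ}
    (hu : Measurable u) {C : ℝ} (hb : ∀ x, |u x| ≤ C)
    {σ : Measure (EuclideanSpace ℝ (Fin n))}
    {ν : EuclideanSpace ℝ (Fin n) → EuclideanSpace ℝ (Fin n)}
    (hBV : IsGaussDeriv n u σ ν)
    (φ : EuclideanSpace ℝ (Fin n) → ℝ) (hφ : IsC1b φ) (hφ1 : ∀ x, |φ x| ≤ 1) (α : ℝ) :
    ∃ d, HasDerivAt (fun α : ℝ => ∫ p, u p.1 * φ (Real.cos α • p.1 + Real.sin α • p.2)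
      ∂((stdGaussian n).prod (stdGaussian n))) d α ∧ ‖d‖ ≤ √(2 / π) * (σ Set.univ).toReal := by
  have hC0 : 0 ≤ C := (abs_nonneg _).trans (hb 0)
  have hc := C1b_fderiv_meas hφ
  have hφ' := hφ
  obtain ⟨h1, K, hK⟩ := hφ'
  have hcφ := h1.continuous
  have hK0 : 0 ≤ K := (norm_nonneg _).trans (hK 0).2
  set γ := stdGaussian n with hγ
  have N1 : Integrable (fun p : EuclideanSpace ℝ (Fin n) × EuclideanSpace ℝ (Fin n) => ‖p.1‖)
    (γ.prod γ) := (gd_norm_integrable n).comp_fst _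
  have N2 : Integrable (fun p : EuclideanSpace ℝ (Fin n) × EuclideanSpace ℝ (Fin n) => ‖p.2‖)
    (γ.prod γ) := (gd_norm_integrable n).comp_snd _
  have N12 : Integrable (fun p : EuclideanSpace ℝ (Fin n) × EuclideanSpace ℝ (Fin n) =>
    ‖p.1‖ * ‖p.2‖) (γ.prod γ) := (gd_norm_integrable n).mul_prod (gd_norm_integrable n)
  have hfd : ∀ z v, |fderiv ℝ φ z v| ≤ K * ‖v‖ := fun z v =>
    ((fderiv ℝ φ z).le_opNorm v).trans (by gcongr; exact (hK z).2)
  -- differentiate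
  have hd := hasDerivAt_integral_of_dominated_loc_of_deriv_le (μ := γ.prod γ) (𝕜 := ℝ)
    (F := fun (α : ℝ) (p : EuclideanSpace ℝ (Fin n) × EuclideanSpace ℝ (Fin n)) =>
      u p.1 * φ (Real.cos α • p.1 + Real.sin α • p.2))
    (F' := fun (α : ℝ) (p : EuclideanSpace ℝ (Fin n) × EuclideanSpace ℝ (Fin n)) =>
      u p.1 * fderiv ℝ φ (Real.cos α • p.1 + Real.sin α • p.2)
        (-Real.sin α • p.1 + Real.cos α • p.2))
    (x₀ := α) (s := Set.univ) (bound := fun p => C * K * (‖p.1‖ + ‖p.2‖))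
    Filter.univ_mem ?_ ?_ ?_ ?_ ?_ ?_
  rotate_left
  · refine Filter.Eventually.of_forall fun x => Measurable.aestronglyMeasurable ?_
    fun_prop
  · refine (integrable_const (C * 1)).mono' (Measurable.aestronglyMeasurable (by fun_prop))
      (ae_of_all _ fun p => ?_)
    rw [Real.norm_eq_abs, abs_mul]
    gcongr; exacts [hb _, hφ1 _]
  · apply Measurable.aestronglyMeasurable
    have : Continuous (fun p : EuclideanSpace ℝ (Fin n) × EuclideanSpace ℝ (Fin n) =>
      fderiv ℝ φ (Real.cos α • p.1 + Real.sin α • p.2)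
        (-Real.sin α • p.1 + Real.cos α • p.2)) := by fun_prop
    exact (hu.comp measurable_fst).mul this.measurable
  · refine ae_of_all _ fun p a _ => ?_
    rw [Real.norm_eq_abs, abs_mul, mul_assoc]
    gcongr
    · exact hb _
    · refine (hfd _ _).trans ?_
      gcongr
      refine (norm_add_le _ _).trans ?_
      rw [norm_smul, norm_smul]
      gcongr
      · refine mul_le_of_le_one_left (norm_nonneg _) ?_
        simpa using Real.abs_sin_le_one a
      · refine mul_le_of_le_one_left (norm_nonneg _) ?_
        simpa using Real.abs_cos_le_one a
  · exact (N1.add N2).const_mul _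
  · refine ae_of_all _ fun p a _ => ?_
    have hA : HasDerivAt (fun a : ℝ => Real.cos a • p.1 + Real.sin a • p.2)
        (-Real.sin a • p.1 + Real.cos a • p.2) a :=
      ((Real.hasDerivAt_cos a).smul_const p.1).add ((Real.hasDerivAt_sin a).smul_const p.2)
    exact (((h1.differentiable (by norm_num)) _).hasFDerivAt.comp_hasDerivAt a hA).const_mul _
  refine ⟨_, hd.2, ?_⟩
  -- compute
  set c := Real.cos α with hcc
  set s := Real.sin α with hss
  let A : EuclideanSpace ℝ (Fin n) × EuclideanSpace ℝ (Fin n) → ℝ := fun p =>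
    u p.1 * (c * fderiv ℝ φ (c • p.1 + s • p.2) p.2)
  let B : EuclideanSpace ℝ (Fin n) × EuclideanSpace ℝ (Fin n) → ℝ := fun p =>
    u p.1 * (s * fderiv ℝ φ (c • p.1 + s • p.2) p.1)
  let D : EuclideanSpace ℝ (Fin n) × EuclideanSpace ℝ (Fin n) → ℝ := fun p =>
    u p.1 * φ (c • p.1 + s • p.2) * ⟪p.2, p.1⟫
  have IA : Integrable A (γ.prod γ) := by
    refine (N2.const_mul (C * (|c| * K))).mono' (Measurable.aestronglyMeasurable ?_)
      (ae_of_all _ fun p => ?_)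
    · have : Continuous (fun p : EuclideanSpace ℝ (Fin n) × EuclideanSpace ℝ (Fin n) =>
        c * fderiv ℝ φ (c • p.1 + s • p.2) p.2) := by fun_prop
      exact (hu.comp measurable_fst).mul this.measurable
    · simp only [A, Real.norm_eq_abs, abs_mul]
      rw [mul_assoc, mul_assoc]
      gcongr; exacts [hb _, hfd _ _]
  have IB : Integrable B (γ.prod γ) := by
    refine (N1.const_mul (C * (|s| * K))).mono' (Measurable.aestronglyMeasurable ?_)
      (ae_of_all _ fun p => ?_)
    · have : Continuous (fun p : EuclideanSpace ℝ (Fin n) × EuclideanSpace ℝ (Fin n) =>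
        s * fderiv ℝ φ (c • p.1 + s • p.2) p.1) := by fun_prop
      exact (hu.comp measurable_fst).mul this.measurable
    · simp only [B, Real.norm_eq_abs, abs_mul]
      rw [mul_assoc, mul_assoc]
      gcongr; exacts [hb _, hfd _ _]
  have ID : Integrable D (γ.prod γ) := by
    refine (N12.const_mul C).mono' (Measurable.aestronglyMeasurable (by fun_prop))
      (ae_of_all _ fun p => ?_)
    simp only [D, Real.norm_eq_abs, abs_mul]
    have h3 : |u p.1| * |φ (c • p.1 + s • p.2)| ≤ C * 1 := by
      gcongr; exacts [hb _, hφ1 _]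
    have h4 := abs_real_inner_le_norm p.2 p.1
    calc _ ≤ (C * 1) * (‖p.2‖ * ‖p.1‖) := by gcongr
      _ = _ := by ring
  have e1 : ∫ p, u p.1 * fderiv ℝ φ (c • p.1 + s • p.2) (-s • p.1 + c • p.2) ∂(γ.prod γ)
      = ∫ p, A p ∂(γ.prod γ) - ∫ p, B p ∂(γ.prod γ) := by
    rw [← integral_sub IA IB]
    congr 1 with p
    simp only [A, B, map_add, map_smul, smul_eq_mul]
    ring
  have e2 : ∫ p, B p ∂(γ.prod γ) = ∫ p, D p ∂(γ.prod γ) := by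
    rw [integral_prod _ IB, integral_prod _ ID]
    congr 1 with x
    simp only [B, D]
    simp_rw [mul_assoc]
    rw [integral_const_mul, integral_const_mul (u x)]
    congr 1
    obtain ⟨q1, q2⟩ := C1b_comp hφ s (c • x)
    have := gd_ibp q1 x
    simp_rw [q2] at this
    simp_rw [add_comm (s • _) (c • x)] at this
    rw [this]
    congr 1 with y
    rw [real_inner_comm]
  have e3 : ∫ p, A p ∂(γ.prod γ) - ∫ p, D p ∂(γ.prod γ) =
      -∫ y, ∫ x, φ (c • x + s • y) * ⟪ν x, y⟫ ∂σ ∂γ := by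
    rw [integral_prod_symm _ IA, integral_prod_symm _ ID,
      ← integral_sub IA.integral_prod_right ID.integral_prod_right, ← integral_neg]
    congr 1 with y
    obtain ⟨q1, q2⟩ := C1b_comp hφ c (s • y)
    have := hBV.2.2 _ q1 y
    simp_rw [q2] at this
    simp only [A, D]
    linarith
  rw [e1, e2, e3, norm_neg, Real.norm_eq_abs]
  exact sigma_bound hu hb hBV φ hφ hφ1 c s

open scoped Convolution in
lemma smooth_approx {n : ℕ} {s : EuclideanSpace ℝ (Fin n) → ℝ} (hs : Measurable s)
    (h1 : ∀ x, |s x| ≤ 1) : ∃ φ : ℕ → EuclideanSpace ℝ (Fin n) → ℝ,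
    (∀ k, IsC1b (φ k)) ∧ (∀ k x, |φ k x| ≤ 1) ∧
    ∀ᵐ x, Filter.Tendsto (fun k => φ k x) Filter.atTop (nhds (s x)) := by
  let b : ℕ → ContDiffBump (0 : EuclideanSpace ℝ (Fin n)) := fun k =>
    ⟨1 / ((k:ℝ) + 1), 2 * (1 / ((k:ℝ) + 1)), by positivity, by
      have : 0 < 1 / ((k:ℝ) + 1) := by positivity
      linarith⟩
  have hl : LocallyIntegrable s volume :=
    (memLp_top_of_bound hs.aestronglyMeasurable 1 (ae_of_all _ h1)).locallyIntegrable le_top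
  refine ⟨fun k => ((b k).normed volume) ⋆[ContinuousLinearMap.lsmul ℝ ℝ, volume] s, ?_, ?_, ?_⟩
  rotate_left
  · intro k x
    beta_reduce
    rw [convolution_def, ← Real.norm_eq_abs, ← (b k).integral_normed (μ := volume)]
    refine norm_integral_le_of_norm_le (b k).integrable_normed (ae_of_all _ fun t => ?_)
    simp only [ContinuousLinearMap.lsmul_apply, norm_smul]
    rw [Real.norm_of_nonneg ((b k).nonneg_normed t)]
    exact mul_le_of_le_one_right ((b k).nonneg_normed t) (h1 _)
  · refine ContDiffBump.ae_convolution_tendsto_right_of_locallyIntegrable (K := 2) ?_ ?_ hl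
    · simpa [b] using (tendsto_one_div_add_atTop_nhds_zero_nat (𝕜 := ℝ)).const_mul 2
    · exact Filter.Eventually.of_forall fun k => le_rfl
  · intro k
    have hbd : ∀ x, |(((b k).normed volume) ⋆[ContinuousLinearMap.lsmul ℝ ℝ, volume] s) x| ≤ 1 := by
      intro x
      rw [convolution_def, ← Real.norm_eq_abs, ← (b k).integral_normed (μ := volume)]
      refine norm_integral_le_of_norm_le (b k).integrable_normed (ae_of_all _ fun t => ?_)
      simp only [ContinuousLinearMap.lsmul_apply, norm_smul]
      rw [Real.norm_of_nonneg ((b k).nonneg_normed t)]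
      exact mul_le_of_le_one_right ((b k).nonneg_normed t) (h1 _)
    have hcs := (b k).hasCompactSupport_normed (μ := volume)
    have hcd : ContDiff ℝ 1 ((b k).normed volume) := (b k).contDiff_normed
    refine ⟨hcs.contDiff_convolution_left _ hcd hl,
      max 1 (∫ t, ‖fderiv ℝ ((b k).normed volume) t‖), fun x => ⟨(hbd x).trans (le_max_left _ _), ?_⟩⟩
    rw [(hcs.hasFDerivAt_convolution_left (ContinuousLinearMap.lsmul ℝ ℝ) hcd hl x).fderiv]
    refine le_trans ?_ (le_max_right _ _)
    have hi : Integrable (fun t => ‖fderiv ℝ ((b k).normed volume) t‖) :=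
      ((hcd.continuous_fderiv (by norm_num)).integrable_of_hasCompactSupport (hcs.fderiv ℝ)).norm
    rw [convolution_def]
    refine norm_integral_le_of_norm_le hi (ae_of_all _ fun t => ?_)
    refine ContinuousLinearMap.opNorm_le_bound _ (norm_nonneg _) fun v => ?_
    simp only [ContinuousLinearMap.precompL_apply, ContinuousLinearMap.lsmul_apply, norm_smul]
    calc _ ≤ ‖fderiv ℝ ((b k).normed volume) t v‖ * 1 := by gcongr; exact h1 _
      _ ≤ _ := by rw [mul_one]; exact ContinuousLinearMap.le_opNorm _ _

lemma dual_bound {n : ℕ} {g : EuclideanSpace ℝ (Fin n) → ℝ} (hg : Measurable g) {C M : ℝ}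
    (hb : ∀ x, |g x| ≤ C)
    (hM : ∀ φ, IsC1b φ → (∀ x, |φ x| ≤ 1) → ∫ x, g x * φ x ∂(stdGaussian n) ≤ M) :
    ∫ x, |g x| ∂(stdGaussian n) ≤ M := by
  let s : EuclideanSpace ℝ (Fin n) → ℝ := fun x => if 0 ≤ g x then 1 else -1
  have hs : Measurable s :=
    Measurable.ite (measurableSet_le measurable_const hg) measurable_const measurable_const
  have h1 : ∀ x, |s x| ≤ 1 := by intro x; simp only [s]; split_ifs <;> simp
  have hgs : ∀ x, |g x| = g x * s x := by
    intro x; simp only [s]; split_ifs with h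
    · rw [abs_of_nonneg h, mul_one]
    · rw [abs_of_neg (not_le.1 h)]; ring
  obtain ⟨φ, p1, p2, p3⟩ := smooth_approx hs h1
  have ht : Filter.Tendsto (fun k => ∫ x, g x * φ k x ∂(stdGaussian n)) Filter.atTop
      (nhds (∫ x, g x * s x ∂(stdGaussian n))) := by
    refine tendsto_integral_of_dominated_convergence (fun _ => C * 1) ?_ (integrable_const _) ?_ ?_
    · intro k
      have := (p1 k).1.continuous
      exact Measurable.aestronglyMeasurable (by fun_prop)
    · intro k
      refine ae_of_all _ fun x => ?_
      have hC0 : 0 ≤ C := (abs_nonneg _).trans (hb 0)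
      rw [Real.norm_eq_abs, abs_mul]
      gcongr; exacts [hb x, p2 k x]
    · filter_upwards [(gd_ac n).ae_le p3] with x hx
      exact hx.const_mul _
  simp_rw [hgs]
  exact le_of_tendsto' ht fun k => hM _ (p1 k) (p2 k)

lemma c_eq {t : ℝ} (ht : 0 < t) :
    ∫ s in (0:ℝ)..t, Real.exp (-s) / Real.sqrt (1 - Real.exp (-2 * s)) =
      Real.arccos (Real.exp (-t)) := by
  have hd : ∀ x ∈ Set.Ioo 0 t, HasDerivAt (fun s => Real.arccos (Real.exp (-s)))
      (Real.exp (-x) / Real.sqrt (1 - Real.exp (-2 * x))) x := by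
    intro x hx
    have h1 : Real.exp (-x) < 1 := by rw [Real.exp_lt_one_iff]; linarith [hx.1]
    have h0 := Real.exp_pos (-x)
    have := (Real.hasDerivAt_arccos (x := Real.exp (-x)) (by linarith) h1.ne).comp x
      ((hasDerivAt_neg x).exp)
    refine this.congr_deriv ?_
    rw [← Real.exp_nat_mul]
    push_cast
    rw [show (2:ℝ) * -x = -2 * x by ring]
    ring
  have hcont : ContinuousOn (fun s => Real.arccos (Real.exp (-s))) (Set.Icc 0 t) :=
    (Real.continuous_arccos.comp (by fun_prop)).continuousOn
  rw [intervalIntegral.integral_eq_sub_of_hasDerivAt_of_le ht.le hcont hd]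
  · simp
  · rw [intervalIntegrable_iff_integrableOn_Ioc_of_le ht.le]
    exact intervalIntegral.integrableOn_deriv_of_nonneg hcont hd (fun x hx => by positivity)

/-- For bounded `u ∈ BV(ℝⁿ,γ)`, `∫ |T_t u − u| dγ ≤ c_t |D_γ u|(ℝⁿ)`. -/
theorem OU_rate_BV (n : ℕ) (u : EuclideanSpace ℝ (Fin n) → ℝ)
    (hu : Measurable u) (C : ℝ) (hb : ∀ x, |u x| ≤ C)
    (σ : Measure (EuclideanSpace ℝ (Fin n)))
    (ν : EuclideanSpace ℝ (Fin n) → EuclideanSpace ℝ (Fin n))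
    (hBV : IsGaussDeriv n u σ ν) (t : ℝ) (ht : 0 < t) :
    (∫ x, |(∫ y, u (Real.exp (-t) • x + Real.sqrt (1 - Real.exp (-2 * t)) • y)
        ∂(stdGaussian n)) - u x| ∂(stdGaussian n)) ≤
      (Real.sqrt (2 / π) * ∫ s in (0:ℝ)..t, Real.exp (-s) / Real.sqrt (1 - Real.exp (-2 * s)))
        * (σ Set.univ).toReal := by
  set θ := Real.arccos (Real.exp (-t)) with hθ
  have he0 := Real.exp_pos (-t)
  have he1 : Real.exp (-t) ≤ 1 := by rw [Real.exp_le_one_iff]; linarith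
  have hcos : Real.exp (-t) = Real.cos θ := (Real.cos_arccos (by linarith) he1).symm
  have hsin : Real.sqrt (1 - Real.exp (-2 * t)) = Real.sin θ := by
    rw [hθ, Real.sin_arccos, ← Real.exp_nat_mul]
    push_cast
    rw [show (2:ℝ) * -t = -2 * t by ring]
  have hθ0 : 0 ≤ θ := Real.arccos_nonneg _
  rw [c_eq ht, ← hθ, hsin, hcos]
  have hC0 : 0 ≤ C := (abs_nonneg _).trans (hb 0)
  have hTm : StronglyMeasurable (fun x => ∫ y, u (Real.cos θ • x + Real.sin θ • y) ∂(stdGaussian n)) := by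
    apply StronglyMeasurable.integral_prod_right
      (f := fun (x y : EuclideanSpace ℝ (Fin n)) => u (Real.cos θ • x + Real.sin θ • y))
    apply Measurable.stronglyMeasurable
    simp only [Function.uncurry_def]
    fun_prop
  have hTb : ∀ x, |∫ y, u (Real.cos θ • x + Real.sin θ • y) ∂(stdGaussian n)| ≤ C := by
    intro x
    have := norm_integral_le_of_norm_le_const (μ := stdGaussian n)
      (f := fun y => u (Real.cos θ • x + Real.sin θ • y)) (C := C) (ae_of_all _ fun y => hb _)
    simpa using this
  refine dual_bound (C := C + C) (hTm.measurable.sub hu)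
    (fun x => (abs_sub _ _).trans (add_le_add (hTb x) (hb x))) fun φ hφ hφ1 => ?_
  have hcφ := hφ.1.continuous
  set F : ℝ → ℝ := fun α => ∫ p, u p.1 * φ (Real.cos α • p.1 + Real.sin α • p.2)
      ∂((stdGaussian n).prod (stdGaussian n)) with hF
  have hFd := fun α => F_deriv hu hb hBV φ hφ hφ1 α
  choose d hd1 hd2 using hFd
  have hmv := convex_univ.norm_image_sub_le_of_norm_hasDerivWithin_le (f := F) (f' := d)
    (x := 0) (y := -θ) (fun x _ => (hd1 x).hasDerivWithinAt) (fun x _ => hd2 x) trivial trivial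
  have hI : ∀ v : EuclideanSpace ℝ (Fin n) × EuclideanSpace ℝ (Fin n) → EuclideanSpace ℝ (Fin n),
      Measurable v → Integrable (fun p => u (v p) * φ p.1)
        ((stdGaussian n).prod (stdGaussian n)) := by
    intro v hv
    refine (integrable_const (C * 1)).mono' (Measurable.aestronglyMeasurable (by fun_prop))
      (ae_of_all _ fun p => ?_)
    rw [Real.norm_eq_abs, abs_mul]
    gcongr; exacts [hb _, hφ1 _]
  have hF0 : F 0 = ∫ x, u x * φ x ∂(stdGaussian n) := by
    simp only [hF, Real.cos_zero, Real.sin_zero, one_smul, zero_smul, add_zero]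
    rw [integral_prod _ (hI _ measurable_fst)]
    simp
  have hF1 : F (-θ) = ∫ x, (∫ y, u (Real.cos θ • x + Real.sin θ • y) ∂(stdGaussian n)) * φ x
      ∂(stdGaussian n) := by
    simp only [hF]
    rw [← gd_rot n θ, integral_map (by fun_prop)
      (Measurable.aestronglyMeasurable (by fun_prop))]
    have e : ∀ p : EuclideanSpace ℝ (Fin n) × EuclideanSpace ℝ (Fin n),
        u (ContinuousLinearMap.rotation θ p).1 *
          φ (Real.cos (-θ) • (ContinuousLinearMap.rotation θ p).1 +
            Real.sin (-θ) • (ContinuousLinearMap.rotation θ p).2) =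
        u (Real.cos θ • p.1 + Real.sin θ • p.2) * φ p.1 := by
      intro p
      rw [ContinuousLinearMap.rotation_apply]
      congr 2
      have h := Real.sin_sq_add_cos_sq θ
      simp only [Real.cos_neg, Real.sin_neg]
      have : p.1 = (Real.sin θ ^ 2 + Real.cos θ ^ 2) • p.1 := by rw [h, one_smul]
      conv_rhs => rw [this]
      module
    simp_rw [e]
    rw [integral_prod _ (hI (fun p => Real.cos θ • p.1 + Real.sin θ • p.2) (by fun_prop))]
    congr 1 with x
    simp only [integral_mul_const]
  have hfin : ∫ x, ((∫ y, u (Real.cos θ • x + Real.sin θ • y) ∂(stdGaussian n)) - u x) * φ x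
      ∂(stdGaussian n) = F (-θ) - F 0 := by
    rw [hF0, hF1, ← integral_sub]
    · congr 1 with x; ring
    · refine (integrable_const (C * 1)).mono'
        ((hTm.measurable.mul hcφ.measurable).aestronglyMeasurable) (ae_of_all _ fun p => ?_)
      rw [Real.norm_eq_abs, abs_mul]
      gcongr; exacts [hTb _, hφ1 _]
    · refine (integrable_const (C * 1)).mono'
        ((hu.mul hcφ.measurable).aestronglyMeasurable) (ae_of_all _ fun p => ?_)
      rw [Real.norm_eq_abs, abs_mul]
      gcongr; exacts [hb _, hφ1 _]
  have hfin' := hfin.le.trans ((le_abs_self _).trans hmv)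
  refine hfin'.trans (le_of_eq ?_)
  rw [Real.norm_eq_abs, sub_zero, abs_neg, abs_of_nonneg hθ0]
  ring
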